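/- arXiv:1606.08974 — 2 statements merged into one kernel-verified Lean document; each statement's English description precedes it below -/
import Mathlib

section
/- Let n ≥ 2 and let X_1,…,X_n be i.i.d. Exponential(1) random variables. Then S_n = n·τ_n − 1 = Σ_{i=1}^{n−1} X_(i)/X_(n) has probability density function f_{S_n}(s) = n! · I_{n−1}(s) / (1 + s)^n for s ∈ [0, n−1], where I_{n−1} denotes the probability density function of the sum of n−1 independent Uniform[0,1] random variables, τ_n = X̄_n / X_(n), and X_(1) ≤ … ≤ X_(n) are the order statistics. -/
open MeasureTheory ProbabilityTheory

/-- The uniform probability measure on `[0, θ]`. -/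
noncomputable def uniformMeasure (θ : ℝ) : Measure ℝ :=
  ENNReal.ofReal θ⁻¹ • volume.restrict (Set.Icc 0 θ)

/-- The joint law of an i.i.d. sample of size `n` from `Uniform[0, θ]`. -/
noncomputable def iidUniform (n : ℕ) (θ : ℝ) : Measure (Fin n → ℝ) :=
  Measure.pi fun _ => uniformMeasure θ

/-- The joint law of an i.i.d. sample of size `n` from `Exponential(r)`. -/
noncomputable def iidExp (n : ℕ) (r : ℝ) : Measure (Fin n → ℝ) :=
  Measure.pi fun _ => expMeasure r

/-- Sample maximum. -/
noncomputable def sampleMax {n : ℕ} (x : Fin n → ℝ) : ℝ := ⨆ i, x i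

/-- Empirical mean. -/
noncomputable def sampleMean {n : ℕ} (x : Fin n → ℝ) : ℝ := (∑ i, x i) / n

/-- The mean/max statistic `τ_n`. -/
noncomputable def tau {n : ℕ} (x : Fin n → ℝ) : ℝ := sampleMean x / sampleMax x

/-- The order statistics of a sample: the sample rearranged in nondecreasing order. -/
noncomputable def sortedVec {n : ℕ} (x : Fin n → ℝ) : Fin n → ℝ := x ∘ Tuple.sort x

/-- The Irwin–Hall distribution with parameter `m`: the law of the sum of `m`
independent `Uniform[0,1]` random variables. -/
noncomputable def irwinHall (m : ℕ) : Measure ℝ :=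
  (iidUniform m 1).map fun u => ∑ i, u i

/-!
Let `n = m + 1`. Almost surely exactly one coordinate of the sample is the largest. Given that it
equals `t`, the `m` others are restricted to `[0, t]`, and dividing them by `t` turns their law into
the uniform law on the unit cube weighted by `(r t)^m exp(-r t ∑ u)`. The weight depends on `u` only
through `s = ∑ u`, which is also the value of `S_n`, so the Irwin–Hall law appears with weight
`(r t)^m exp(-r t s)`. Averaging this weight over `t ~ Exponential(r)` is a Gamma integral with
value `m! / (1 + s)^(m + 1)`, and the `m + 1` possible positions of the maximum turn `m!` into
`(m + 1)!`.
-/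

open scoped ENNReal

section PiMeasure

theorem lintegral_fin_prod_eq_prod {n : ℕ} {α : Fin n → Type*} [∀ i, MeasurableSpace (α i)]
    (μ : ∀ i, Measure (α i)) [∀ i, SigmaFinite (μ i)] {f : ∀ i, α i → ℝ≥0∞}
    (hf : ∀ i, Measurable (f i)) :
    ∫⁻ x, ∏ i, f i (x i) ∂Measure.pi μ = ∏ i, ∫⁻ a, f i a ∂μ i := by
  induction n with
  | zero => simp
  | succ n ih =>
    have htail : Measurable fun y : ∀ i : Fin n, α i.succ => ∏ i, f i.succ (y i) :=
      Finset.measurable_fun_prod _ fun i _ => (hf i.succ).comp (measurable_pi_apply i)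
    rw [← (measurePreserving_piFinSuccAbove μ 0).symm.lintegral_comp_emb
      (MeasurableEquiv.measurableEmbedding _), Fin.prod_univ_succ,
      ← ih (fun i => μ i.succ) fun i => hf i.succ,
      ← lintegral_prod_mul (hf 0).aemeasurable htail.aemeasurable]
    simp only [Fin.prod_univ_succ]
    rfl

theorem lintegral_fintype_prod_eq_prod {ι : Type*} [Fintype ι] {α : ι → Type*}
    [∀ i, MeasurableSpace (α i)] (μ : ∀ i, Measure (α i)) [∀ i, SigmaFinite (μ i)]
    {f : ∀ i, α i → ℝ≥0∞} (hf : ∀ i, Measurable (f i)) :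
    ∫⁻ x, ∏ i, f i (x i) ∂Measure.pi μ = ∏ i, ∫⁻ a, f i a ∂μ i := by
  let e := (Fintype.equivFin ι).symm
  rw [← (measurePreserving_piCongrLeft μ e).lintegral_comp_emb
    (MeasurableEquiv.measurableEmbedding _)]
  simp_rw [← e.prod_comp, MeasurableEquiv.coe_piCongrLeft, Equiv.piCongrLeft_apply_apply]
  exact lintegral_fin_prod_eq_prod _ fun i => hf (e i)

theorem pi_withDensity {ι : Type*} [Fintype ι] {α : ι → Type*} [∀ i, MeasurableSpace (α i)]
    (μ : ∀ i, Measure (α i)) [∀ i, SigmaFinite (μ i)] {f : ∀ i, α i → ℝ≥0∞}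
    (hf : ∀ i, Measurable (f i)) [∀ i, SigmaFinite ((μ i).withDensity (f i))] :
    (Measure.pi fun i => (μ i).withDensity (f i)) =
      (Measure.pi μ).withDensity fun x => ∏ i, f i (x i) := by
  refine Measure.pi_eq fun s hs => ?_
  rw [withDensity_apply _ (MeasurableSet.univ_pi hs), Measure.restrict_pi_pi,
    lintegral_fintype_prod_eq_prod _ hf]
  exact Finset.prod_congr rfl fun i _ => (withDensity_apply _ (hs i)).symm

theorem measure_pi_setOf_eval_eq_eval {α : Type*} [MeasurableSpace α] [MeasurableEq α] {n : ℕ}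
    (μ : Fin (n + 1) → Measure α) [∀ i, SigmaFinite (μ i)] [∀ i, NullSingletonClass (μ i)]
    {i j : Fin (n + 1)} (hij : i ≠ j) :
    Measure.pi μ {x | x j = x i} = 0 := by
  obtain ⟨k, rfl⟩ := Fin.exists_succAbove_eq hij.symm
  have hS : MeasurableSet {p : α × (Fin n → α) | p.2 k = p.1} :=
    measurableSet_eq_fun (by fun_prop) (by fun_prop)
  refine ((measurePreserving_piFinSuccAbove μ i).measure_preimage_equiv
    {p : α × (Fin n → α) | p.2 k = p.1}).trans ?_
  rw [Measure.measure_prod_null hS]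
  exact ae_of_all _ fun a => Measure.pi_hyperplane (fun j => μ (i.succAbove j)) k a

variable {α : Type*} [LinearOrder α] [TopologicalSpace α] [OrderClosedTopology α]
  [SecondCountableTopology α] [MeasurableSpace α] [OpensMeasurableSpace α]

theorem measurableSet_setOf_forall_le_eval {ι : Type*} [Countable ι] (i : ι) :
    MeasurableSet {x : ι → α | ∀ j, x j ≤ x i} := by
  simp only [Set.ofPred_forall]
  exact MeasurableSet.iInter fun j => measurableSet_le (by fun_prop) (by fun_prop)

theorem setLIntegral_pi_forall_le_eval {n : ℕ} (μ : Measure α) [SigmaFinite μ]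
    {F : (Fin (n + 1) → α) → ℝ≥0∞} (hF : Measurable F) (i : Fin (n + 1)) :
    ∫⁻ x in {x | ∀ j, x j ≤ x i}, F x ∂Measure.pi (fun _ => μ) =
      ∫⁻ a, ∫⁻ y in Set.univ.pi fun _ => Set.Iic a, F (i.insertNth a y)
        ∂Measure.pi (fun _ : Fin n => μ) ∂μ := by
  have hA : MeasurableSet {x : Fin (n + 1) → α | ∀ j, x j ≤ x i} :=
    measurableSet_setOf_forall_le_eval i
  rw [← lintegral_indicator hA,
    ← (measurePreserving_piFinSuccAbove (fun _ => μ) i).symm.lintegral_comp (hF.indicator hA),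
    lintegral_prod _ (by fun_prop)]
  refine lintegral_congr fun a => ?_
  rw [← lintegral_indicator (MeasurableSet.univ_pi fun _ => measurableSet_Iic)]
  refine lintegral_congr fun y => ?_
  classical
  simp [Set.indicator_apply, Fin.forall_iff_succAbove i, Pi.le_def]
  rfl

/-- Almost surely exactly one coordinate is the largest; the sum runs over its position. -/
theorem lintegral_pi_eq_sum_insertNth {n : ℕ} (μ : Measure α) [SigmaFinite μ]
    [NullSingletonClass μ] {F : (Fin (n + 1) → α) → ℝ≥0∞} (hF : Measurable F) :
    ∫⁻ x, F x ∂Measure.pi (fun _ => μ) =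
      ∑ i : Fin (n + 1), ∫⁻ a, ∫⁻ y in Set.univ.pi fun _ => Set.Iic a, F (i.insertNth a y)
        ∂Measure.pi (fun _ : Fin n => μ) ∂μ := by
  have hcover : ⋃ i, {x : Fin (n + 1) → α | ∀ j, x j ≤ x i} = Set.univ :=
    Set.eq_univ_of_forall fun x => Set.mem_iUnion.2 (Finite.exists_max x)
  have hdisj : Pairwise (Function.onFun (AEDisjoint (Measure.pi fun _ => μ))
      fun i : Fin (n + 1) => {x : Fin (n + 1) → α | ∀ j, x j ≤ x i}) := fun i j hij =>
    measure_mono_null (fun x hx => le_antisymm (hx.1 j) (hx.2 i))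
      (measure_pi_setOf_eval_eq_eval (fun _ => μ) hij)
  rw [← setLIntegral_univ, ← hcover, lintegral_iUnion₀
    (fun i => (measurableSet_setOf_forall_le_eval i).nullMeasurableSet) hdisj, tsum_fintype]
  exact Finset.sum_congr rfl fun i _ => setLIntegral_pi_forall_le_eval μ hF i

end PiMeasure

section WithDensity

variable {α β : Type*} [MeasurableSpace α] [MeasurableSpace β]

theorem map_withDensity_comp (μ : Measure α) {g : α → β} (hg : Measurable g) {f : β → ℝ≥0∞}
    (hf : Measurable f) :
    (μ.withDensity fun a => f (g a)).map g = (μ.map g).withDensity f := by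
  ext s hs
  rw [Measure.map_apply hg hs, withDensity_apply _ (hg hs), withDensity_apply _ hs,
    setLIntegral_map hs hf hg]

/-- The density `g` need not be measurable, which is why `withDensity_mul` does not apply. -/
theorem withDensity_mul_of_measurable_left (μ : Measure α) [SFinite μ] {c : α → ℝ≥0∞}
    (hc : Measurable c) (hc_top : ∀ a, c a ≠ ∞) (g : α → ℝ≥0∞) :
    μ.withDensity (c * g) = (μ.withDensity g).withDensity c := by
  apply le_antisymm
  · obtain ⟨h, hh, hle, heq⟩ := exists_measurable_le_withDensity_eq μ (c * g)
    have hdiv : h = h / c * c := by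
      ext a
      by_cases hca : c a = 0
      · have := hle a
        simp_all
      · simp [ENNReal.div_mul_cancel hca (hc_top a)]
    have hg : h / c ≤ g := fun a => ENNReal.div_le_of_le_mul' (hle a)
    rw [← heq, hdiv, withDensity_mul μ (hh.div hc) hc]
    refine Measure.le_iff.2 fun s hs => ?_
    rw [withDensity_apply _ hs, withDensity_apply _ hs]
    exact lintegral_mono' (Measure.restrict_mono le_rfl (withDensity_mono (ae_of_all _ hg))) le_rfl
  · obtain ⟨h, hh, hle, heq⟩ := exists_measurable_le_withDensity_eq μ g
    rw [← heq, ← withDensity_mul μ hh hc, mul_comm]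
    exact withDensity_mono (ae_of_all _ fun a => mul_le_mul_right (hle a) _)

theorem withDensity_ofReal_withDensity_ofReal (μ : Measure α) [SFinite μ] {c g : α → ℝ}
    (hc : Measurable c) {s : Set α} [DecidablePred (· ∈ s)] (hs : MeasurableSet s)
    (hc_nonneg : ∀ a ∈ s, 0 ≤ c a)
    (hmem : ∀ᵐ a ∂μ.withDensity fun a => ENNReal.ofReal (g a), a ∈ s) :
    (μ.withDensity fun a => ENNReal.ofReal (g a)).withDensity (fun a => ENNReal.ofReal (c a)) =
      μ.withDensity fun a => ENNReal.ofReal (if a ∈ s then c a * g a else 0) := by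
  have hind : (fun a => ENNReal.ofReal (c a)) =ᵐ[μ.withDensity fun a => ENNReal.ofReal (g a)]
      fun a => ENNReal.ofReal (s.indicator c a) :=
    hmem.mono fun a ha => by simp only [Set.indicator_of_mem ha]
  rw [withDensity_congr_ae hind, ← withDensity_mul_of_measurable_left μ
    (hc.indicator hs).ennreal_ofReal fun a => ENNReal.ofReal_ne_top]
  congr 1
  ext a
  by_cases ha : a ∈ s
  · simp [ha, ENNReal.ofReal_mul (hc_nonneg a ha)]
  · simp [ha]

end WithDensity

section ExpMeasure

instance (r : ℝ) : SigmaFinite (expMeasure r) :=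
  SigmaFinite.withDensity_ofReal (exponentialPDFReal r)

instance (r : ℝ) : NullSingletonClass (expMeasure r) :=
  ⟨fun t => withDensity_absolutelyContinuous volume (exponentialPDF r) (measure_singleton t)⟩

theorem expMeasure_eq_withDensity (r : ℝ) :
    expMeasure r =
      (volume.restrict (Set.Ici 0)).withDensity fun t =>
        ENNReal.ofReal (r * Real.exp (-(r * t))) := by
  rw [← withDensity_indicator measurableSet_Ici]
  change volume.withDensity (exponentialPDF r) = _
  congr 1
  ext t
  rw [exponentialPDF_eq, Set.indicator_apply, apply_ite ENNReal.ofReal, ENNReal.ofReal_zero]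
  rfl

theorem ae_expMeasure_pos (r : ℝ) : ∀ᵐ t ∂expMeasure r, 0 < t := by
  rw [expMeasure_eq_withDensity, Measure.restrict_congr_set Ioi_ae_eq_Ici.symm]
  exact (withDensity_absolutelyContinuous _ _).ae_le (ae_restrict_mem measurableSet_Ioi)

theorem lintegral_expMeasure_pow_mul_exp_neg {r : ℝ} (hr : 0 < r) (m : ℕ) {s : ℝ} (hs : -1 < s) :
    ∫⁻ t, ENNReal.ofReal ((r * t) ^ m * Real.exp (-(r * t * s))) ∂expMeasure r =
      ENNReal.ofReal (m.factorial / (1 + s) ^ (m + 1)) := by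
  have hs' : 0 < 1 + s := by linarith
  have hgamma (t : ℝ) (ht : 0 ≤ t) :
      ENNReal.ofReal (r * Real.exp (-(r * t))) *
          ENNReal.ofReal ((r * t) ^ m * Real.exp (-(r * t * s))) =
        ENNReal.ofReal (m.factorial / (1 + s) ^ (m + 1)) * gammaPDF (m + 1) (r * (1 + s)) t := by
    rw [gammaPDF_of_nonneg ht, ← ENNReal.ofReal_mul (by positivity),
      ← ENNReal.ofReal_mul (by positivity), Real.Gamma_nat_eq_factorial, add_sub_cancel_right,
      Real.rpow_natCast, ← Nat.cast_add_one, Real.rpow_natCast,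
      show -(r * (1 + s) * t) = -(r * t) + -(r * t * s) by ring, Real.exp_add]
    congr 1
    rw [mul_pow, mul_pow]
    field_simp
    ring
  have hsupport : Function.support (gammaPDF (m + 1) (r * (1 + s))) ⊆ Set.Ici 0 :=
    Function.support_subset_iff'.2 fun t ht => gammaPDF_of_neg (by simpa using ht)
  calc
    _ = ∫⁻ t in Set.Ici 0,
          ENNReal.ofReal (m.factorial / (1 + s) ^ (m + 1)) * gammaPDF (m + 1) (r * (1 + s)) t := by
      rw [expMeasure_eq_withDensity,
        lintegral_withDensity_eq_lintegral_mul _ (by fun_prop) (by fun_prop)]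
      exact setLIntegral_congr_fun measurableSet_Ici hgamma
    _ = _ := by
      rw [lintegral_const_mul' _ _ ENNReal.ofReal_ne_top,
        setLIntegral_eq_of_support_subset hsupport,
        lintegral_gammaPDF_eq_one (by positivity) (by positivity), mul_one]

end ExpMeasure

section ScalingToCube

theorem uniformMeasure_one : uniformMeasure 1 = volume.restrict (Set.Icc (0 : ℝ) 1) := by
  simp [uniformMeasure]

instance : IsProbabilityMeasure (uniformMeasure 1) := by
  rw [uniformMeasure_one]
  exact ⟨by simp⟩

theorem volume_restrict_Icc_zero {t : ℝ} (ht : 0 < t) :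
    volume.restrict (Set.Icc 0 t) = ENNReal.ofReal t • (uniformMeasure 1).map (t * ·) := by
  have hpre : (t * ·) ⁻¹' Set.Icc 0 t = Set.Icc (0 : ℝ) 1 := by
    rw [Set.preimage_const_mul_Icc₀ _ _ ht, zero_div, div_self ht.ne']
  rw [← Real.smul_map_volume_mul_left ht.ne', Measure.restrict_smul, abs_of_pos ht,
    Measure.restrict_map (by fun_prop) measurableSet_Icc, hpre, uniformMeasure_one]

theorem expMeasure_restrict_Iic (r : ℝ) {t : ℝ} (ht : 0 < t) :
    (expMeasure r).restrict (Set.Iic t) =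
      ((uniformMeasure 1).withDensity fun u =>
        ENNReal.ofReal (r * t * Real.exp (-(r * t * u)))).map (t * ·) := by
  have hdensity (u : ℝ) : ENNReal.ofReal (r * t * Real.exp (-(r * t * u))) =
      ENNReal.ofReal t * ENNReal.ofReal (r * Real.exp (-(r * (t * u)))) := by
    rw [← ENNReal.ofReal_mul ht.le]
    ring_nf
  simp only [hdensity]
  rw [map_withDensity_comp _ (by fun_prop)
      (f := fun x => ENNReal.ofReal t * ENNReal.ofReal (r * Real.exp (-(r * x)))) (by fun_prop),
    expMeasure_eq_withDensity, restrict_withDensity measurableSet_Iic,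
    Measure.restrict_restrict measurableSet_Iic, Set.inter_comm, Set.Ici_inter_Iic,
    volume_restrict_Icc_zero ht, withDensity_smul_measure, ← withDensity_smul _ (by fun_prop)]
  rfl

theorem iidExp_restrict_pi_Iic (m : ℕ) {r t : ℝ} (hr : 0 ≤ r) (ht : 0 < t) :
    (iidExp m r).restrict (Set.univ.pi fun _ => Set.Iic t) =
      ((iidUniform m 1).withDensity fun u =>
        ENNReal.ofReal ((r * t) ^ m * Real.exp (-(r * t * ∑ j, u j)))).map (t • ·) := by
  have hprod (u : Fin m → ℝ) :
      ENNReal.ofReal ((r * t) ^ m * Real.exp (-(r * t * ∑ j, u j))) =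
        ∏ j, ENNReal.ofReal (r * t * Real.exp (-(r * t * u j))) := by
    rw [← ENNReal.ofReal_prod_of_nonneg fun _ _ => by positivity, Finset.prod_mul_distrib,
      ← Real.exp_sum, Finset.sum_neg_distrib, ← Finset.mul_sum]
    simp
  have : SigmaFinite (((uniformMeasure 1).withDensity fun u =>
      ENNReal.ofReal (r * t * Real.exp (-(r * t * u)))).map (t * ·)) := by
    rw [← expMeasure_restrict_Iic r ht]
    infer_instance
  rw [iidExp, Measure.restrict_pi_pi, expMeasure_restrict_Iic r ht,
    ← Measure.pi_map_pi fun _ => by fun_prop, pi_withDensity _ fun _ => by fun_prop]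
  simp only [← hprod]
  rfl

theorem map_sum_div_iidExp_restrict (m : ℕ) {r t : ℝ} (hr : 0 ≤ r) (ht : 0 < t) :
    ((iidExp m r).restrict (Set.univ.pi fun _ => Set.Iic t)).map (fun y => (∑ j, y j) / t) =
      (irwinHall m).withDensity fun s =>
        ENNReal.ofReal ((r * t) ^ m * Real.exp (-(r * t * s))) := by
  have hsum : (fun y : Fin m → ℝ => (∑ j, y j) / t) ∘ (t • ·) = fun u => ∑ j, u j := by
    ext u
    simp [← Finset.mul_sum, ht.ne']
  rw [iidExp_restrict_pi_Iic m hr ht, Measure.map_map (by fun_prop) (by fun_prop), hsum,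
    irwinHall, ← map_withDensity_comp _ (by fun_prop) (by fun_prop)]

theorem ae_irwinHall_mem_Icc (m : ℕ) : ∀ᵐ s ∂irwinHall m, s ∈ Set.Icc (0 : ℝ) m := by
  have hcube : ∀ᵐ u ∂iidUniform m 1, ∀ j, u j ∈ Set.Icc (0 : ℝ) 1 := by
    refine Filter.eventually_all.2 fun j => Measure.tendsto_eval_ae_ae.eventually ?_
    rw [uniformMeasure_one]
    exact ae_restrict_mem measurableSet_Icc
  refine (ae_map_iff (by fun_prop) measurableSet_Icc).2 (hcube.mono fun u hu => ⟨?_, ?_⟩)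
  · exact Finset.sum_nonneg fun j _ => (hu j).1
  · simpa using Finset.sum_le_card_nsmul Finset.univ u 1 fun j _ => (hu j).2

end ScalingToCube

section SampleStatistics

theorem sampleMax_eq_of_forall_le {n : ℕ} {x : Fin n → ℝ} {i : Fin n} (h : ∀ j, x j ≤ x i) :
    sampleMax x = x i := by
  have : Nonempty (Fin n) := ⟨i⟩
  exact le_antisymm (ciSup_le h) (le_ciSup (Set.finite_range x).bddAbove i)

theorem measurable_tau (n : ℕ) : Measurable (tau : (Fin n → ℝ) → ℝ) := by
  have : Measurable (sampleMax : (Fin n → ℝ) → ℝ) :=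
    Measurable.iSup fun i => measurable_pi_apply i
  unfold tau sampleMean
  fun_prop

theorem mul_tau {n : ℕ} (hn : n ≠ 0) (x : Fin n → ℝ) :
    (n : ℝ) * tau x = (∑ i, x i) / sampleMax x := by
  have : (n : ℝ) ≠ 0 := by exact_mod_cast hn
  rw [tau, sampleMean]
  field_simp

theorem mul_tau_insertNth_sub_one {m : ℕ} (i : Fin (m + 1)) {t : ℝ} (ht : t ≠ 0) {y : Fin m → ℝ}
    (hy : ∀ j, y j ≤ t) :
    ((m + 1 : ℕ) : ℝ) * tau (i.insertNth t y : Fin (m + 1) → ℝ) - 1 = (∑ j, y j) / t := by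
  have hmax : sampleMax (i.insertNth t y : Fin (m + 1) → ℝ) = t := by
    rw [sampleMax_eq_of_forall_le (i := i)] <;> simp [Fin.forall_iff_succAbove i, hy]
  rw [mul_tau m.succ_ne_zero, hmax, Fin.sum_univ_succAbove _ i]
  simp [add_div, ht]

theorem sortedVec_last {m : ℕ} (x : Fin (m + 1) → ℝ) :
    sortedVec x (Fin.last m) = sampleMax x := by
  refine (sampleMax_eq_of_forall_le (i := Tuple.sort x (Fin.last m)) fun j => ?_).symm
  simpa using Tuple.monotone_sort x (Fin.le_last ((Tuple.sort x).symm j))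

theorem sum_sortedVec {n : ℕ} (x : Fin n → ℝ) : ∑ i, sortedVec x i = ∑ i, x i :=
  Equiv.sum_comp (Tuple.sort x) x

theorem mul_tau_sub_one_eq_sum_sortedVec {m : ℕ} {x : Fin (m + 1) → ℝ} (hx : sampleMax x ≠ 0) :
    ((m + 1 : ℕ) : ℝ) * tau x - 1 =
      ∑ i : Fin m, sortedVec x i.castSucc / sortedVec x (Fin.last m) := by
  rw [mul_tau m.succ_ne_zero, ← sum_sortedVec, Fin.sum_univ_castSucc, sortedVec_last,
    add_div, div_self hx, add_sub_cancel_right, Finset.sum_div]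

end SampleStatistics

section LawOfMulTau

theorem ae_iidExp_sampleMax_pos (m : ℕ) (r : ℝ) : ∀ᵐ x ∂iidExp (m + 1) r, 0 < sampleMax x := by
  have hpos : ∀ᵐ x ∂iidExp (m + 1) r, ∀ i, 0 < x i :=
    Filter.eventually_all.2 fun _ => Measure.tendsto_eval_ae_ae.eventually (ae_expMeasure_pos r)
  filter_upwards [hpos] with x hx
  obtain ⟨i, hi⟩ := Finite.exists_max x
  exact sampleMax_eq_of_forall_le hi ▸ hx i

theorem setLIntegral_comp_mul_tau_insertNth {m : ℕ} (i : Fin (m + 1)) {r t : ℝ} (hr : 0 ≤ r)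
    (ht : 0 < t) {φ : ℝ → ℝ≥0∞} (hφ : Measurable φ) :
    ∫⁻ y in Set.univ.pi fun _ => Set.Iic t,
        φ (((m + 1 : ℕ) : ℝ) * tau (i.insertNth t y : Fin (m + 1) → ℝ) - 1) ∂iidExp m r =
      ∫⁻ s, ENNReal.ofReal ((r * t) ^ m * Real.exp (-(r * t * s))) * φ s ∂irwinHall m := by
  have hbox : MeasurableSet (Set.univ.pi fun _ : Fin m => Set.Iic t) :=
    MeasurableSet.univ_pi fun _ => measurableSet_Iic
  calc
    _ = ∫⁻ y in Set.univ.pi fun _ => Set.Iic t, φ ((∑ j, y j) / t) ∂iidExp m r :=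
      setLIntegral_congr_fun hbox fun y hy => by
        rw [mul_tau_insertNth_sub_one i ht.ne' fun j => hy j trivial]
    _ = _ := by
      rw [← lintegral_map hφ (by fun_prop), map_sum_div_iidExp_restrict m hr ht,
        lintegral_withDensity_eq_lintegral_mul _ (by fun_prop) hφ]
      rfl

theorem lintegral_comp_mul_tau_iidExp (m : ℕ) {r : ℝ} (hr : 0 < r) {φ : ℝ → ℝ≥0∞}
    (hφ : Measurable φ) :
    ∫⁻ x, φ (((m + 1 : ℕ) : ℝ) * tau x - 1) ∂iidExp (m + 1) r =
      ∫⁻ s, ENNReal.ofReal ((m + 1).factorial / (1 + s) ^ (m + 1)) * φ s ∂irwinHall m := by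
  have hφτ : Measurable fun x : Fin (m + 1) → ℝ => φ (((m + 1 : ℕ) : ℝ) * tau x - 1) :=
    hφ.comp (((measurable_tau _).const_mul _).sub_const 1)
  have : SFinite (irwinHall m) := by unfold irwinHall iidUniform; infer_instance
  calc
    _ = ∑ _i : Fin (m + 1), ∫⁻ t, ∫⁻ s,
          ENNReal.ofReal ((r * t) ^ m * Real.exp (-(r * t * s))) * φ s
            ∂irwinHall m ∂expMeasure r := by
      refine (lintegral_pi_eq_sum_insertNth _ hφτ).trans (Finset.sum_congr rfl fun i _ => ?_)
      exact lintegral_congr_ae ((ae_expMeasure_pos r).mono fun t ht =>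
        setLIntegral_comp_mul_tau_insertNth i hr.le ht hφ)
    _ = (m + 1 : ℕ) * ∫⁻ s, ∫⁻ t,
          ENNReal.ofReal ((r * t) ^ m * Real.exp (-(r * t * s))) * φ s
            ∂expMeasure r ∂irwinHall m := by
      rw [Finset.sum_const, Finset.card_fin, nsmul_eq_mul, lintegral_lintegral_swap (by fun_prop)]
    _ = (m + 1 : ℕ) * ∫⁻ s, ENNReal.ofReal (m.factorial / (1 + s) ^ (m + 1)) * φ s
          ∂irwinHall m := by
      congr 1
      refine lintegral_congr_ae ((ae_irwinHall_mem_Icc m).mono fun s hs => ?_)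
      dsimp only
      rw [lintegral_mul_const _ (by fun_prop),
        lintegral_expMeasure_pow_mul_exp_neg hr m (by linarith [hs.1])]
    _ = _ := by
      rw [← lintegral_const_mul' _ _ (ENNReal.natCast_ne_top _)]
      refine lintegral_congr fun s => ?_
      rw [← mul_assoc, ← ENNReal.ofReal_natCast, ← ENNReal.ofReal_mul (by positivity),
        Nat.factorial_succ, Nat.cast_mul, mul_div_assoc]

theorem map_mul_tau_sub_one_iidExp (m : ℕ) {r : ℝ} (hr : 0 < r) :
    (iidExp (m + 1) r).map (fun x => ((m + 1 : ℕ) : ℝ) * tau x - 1) =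
      (irwinHall m).withDensity fun s =>
        ENNReal.ofReal ((m + 1).factorial / (1 + s) ^ (m + 1)) := by
  refine Measure.ext_of_lintegral _ fun φ hφ => ?_
  rw [lintegral_map hφ (((measurable_tau _).const_mul _).sub_const 1),
    lintegral_comp_mul_tau_iidExp m hr hφ,
    lintegral_withDensity_eq_lintegral_mul _ (by fun_prop) hφ]
  rfl

theorem n_tau_sub_one_density_exponential_general (m : ℕ) {r : ℝ} (hr : 0 < r) (I : ℝ → ℝ)
    (hI : irwinHall m = volume.withDensity fun s => ENNReal.ofReal (I s)) :
    (∀ᵐ x ∂iidExp (m + 1) r,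
      ((m + 1 : ℕ) : ℝ) * tau x - 1 =
        ∑ i : Fin m, sortedVec x i.castSucc / sortedVec x (Fin.last m)) ∧
    (iidExp (m + 1) r).map (fun x => ((m + 1 : ℕ) : ℝ) * tau x - 1) =
      volume.withDensity fun s =>
        ENNReal.ofReal
          (if s ∈ Set.Icc (0 : ℝ) m then
            ((m + 1).factorial : ℝ) * I s / (1 + s) ^ (m + 1)
          else 0) := by
  constructor
  · exact (ae_iidExp_sampleMax_pos m r).mono fun x hx => mul_tau_sub_one_eq_sum_sortedVec hx.ne'
  · rw [map_mul_tau_sub_one_iidExp m hr, hI, withDensity_ofReal_withDensity_ofReal volume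
      (by fun_prop) measurableSet_Icc
      (fun s hs => div_nonneg (by positivity) (pow_nonneg (by linarith [hs.1]) _))
      (hI ▸ ae_irwinHall_mem_Icc m)]
    simp only [div_mul_eq_mul_div]

end LawOfMulTau

/-- Under an i.i.d. `Exponential(1)` sample, `S_n = n·τ_n − 1 = ∑_{i=1}^{n-1} X_(i)/X_(n)`
has density `s ↦ n! · I_{n-1}(s) / (1+s)^n` on `[0, n−1]`, where `I_{n-1}` is the
Irwin–Hall density with parameter `n − 1`. -/
theorem n_tau_sub_one_density_exponential
    (n : ℕ) (hn : 2 ≤ n)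
    (I : ℝ → ℝ)
    (hI : irwinHall (n - 1) = volume.withDensity fun s => ENNReal.ofReal (I s)) :
    (∀ᵐ x ∂iidExp n 1,
      (n : ℝ) * tau x - 1 =
        ∑ i : Fin (n - 1),
          sortedVec x (Fin.castLE (Nat.sub_le n 1) i) / sortedVec x ⟨n - 1, by omega⟩) ∧
    (iidExp n 1).map (fun x => (n : ℝ) * tau x - 1) =
      volume.withDensity fun s =>
        ENNReal.ofReal
          (if s ∈ Set.Icc (0 : ℝ) ((n : ℝ) - 1) then
            (Nat.factorial n : ℝ) * I s / (1 + s) ^ n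
          else 0) := by
  obtain ⟨m, rfl⟩ : ∃ m, n = m + 1 := ⟨n - 1, by omega⟩
  simpa using! n_tau_sub_one_density_exponential_general m one_pos I hI
end

section
/- For each n ≥ 2 let X_1,…,X_n be i.i.d. Exponential(1) random variables and let τ_n = X̄_n / X_(n). Then for every t ∈ ℝ, P( (log n)² · (τ_n − 1/log n) ≤ t ) converges, as n → ∞, to 1 − exp(−e^{t}); that is, (log n)²·(τ_n − 1/log n) converges in distribution to −G where G has the standard Gumbel distribution with CDF exp(−e^{−t}). -/
open MeasureTheory ProbabilityTheory Filter

/-!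
When the sample mean lies within `ε` of the mean `m` of the law, the event `τ_n ≤ c` is squeezed
between `X_(n) > (m + ε) / c` and `X_(n) > (m - ε) / c`. By Chebyshev's inequality one may take
`ε = m / (log n)²`, because `n / (log n)⁴ → ∞`. If the tail of the law is asymptotic to
`K * exp (-r * x)` and `c = r * m * (1 / log n + t / (log n)²)`, then both thresholds, multiplied by
`r`, are `log n - t + o(1)`. The expected number of observations beyond either threshold therefore
tends to `K * exp t`, and the probability that there is none to `exp (-(K * exp t))`.
-/

/-- The joint law of an i.i.d. sample of size `n` from `μ`; it is reducible, so that the library's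
results on `Measure.pi` apply to it. The law `iidExp n r` is `iidLaw n (expMeasure r)`. -/
noncomputable abbrev iidLaw (n : ℕ) (μ : Measure ℝ) : Measure (Fin n → ℝ) :=
  Measure.pi fun _ => μ

section Pointwise

variable {n : ℕ} {x : Fin n → ℝ} {a c m ε : ℝ}

lemma sampleMax_le_iff (hn : n ≠ 0) : sampleMax x ≤ a ↔ ∀ i, x i ≤ a := by
  have : NeZero n := ⟨hn⟩
  exact ciSup_le_iff (Set.finite_range x).bddAbove

lemma sampleMean_le_sampleMax (x : Fin n → ℝ) : sampleMean x ≤ sampleMax x := by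
  rcases Nat.eq_zero_or_pos n with rfl | hn
  · simp [sampleMean, sampleMax]
  rw [sampleMean, div_le_iff₀ (by exact_mod_cast hn)]
  calc ∑ i, x i ≤ ∑ _i : Fin n, sampleMax x :=
        Finset.sum_le_sum fun i _ => le_ciSup (Set.finite_range x).bddAbove i
    _ = sampleMax x * n := by simp [mul_comm]

lemma tau_le_iff (hc : 0 < c) (hx : 0 < sampleMean x) :
    tau x ≤ c ↔ sampleMean x / c ≤ sampleMax x := by
  rw [tau, div_le_comm₀ (hx.trans_le (sampleMean_le_sampleMax x)) hc]

lemma lt_sampleMax_of_tau_le (hc : 0 < c) (hεm : ε ≤ m) (hx : |sampleMean x - m| < ε)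
    (hτ : tau x ≤ c) : (m - ε) / c < sampleMax x := by
  have hmean : m - ε < sampleMean x := by linarith [(abs_lt.1 hx).1]
  calc (m - ε) / c < sampleMean x / c := by gcongr
    _ ≤ sampleMax x := (tau_le_iff hc (by linarith)).1 hτ

lemma tau_le_of_le_sampleMax (hc : 0 < c) (hεm : ε ≤ m) (hx : |sampleMean x - m| < ε)
    (hmax : (m + ε) / c ≤ sampleMax x) : tau x ≤ c := by
  obtain ⟨hlower, hupper⟩ := abs_lt.1 hx
  refine (tau_le_iff hc (by linarith)).2 (le_trans ?_ hmax)
  gcongr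
  linarith

end Pointwise

open scoped Topology Nat

section SampleMax

variable {μ : Measure ℝ} [IsProbabilityMeasure μ]

lemma iidLaw_real_lt_sampleMax {n : ℕ} (hn : n ≠ 0) (a : ℝ) :
    (iidLaw n μ).real {x | a < sampleMax x} = 1 - (1 - μ.real (Set.Ioi a)) ^ n := by
  have hset : {x : Fin n → ℝ | a < sampleMax x} = (Set.univ.pi fun _ => Set.Iic a)ᶜ := by
    ext x
    simp [← not_le, sampleMax_le_iff hn, Pi.le_def]
  have hpi : (iidLaw n μ).real (Set.univ.pi fun _ => Set.Iic a) = μ.real (Set.Iic a) ^ n := by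
    rw [measureReal_def, Measure.pi_pi]
    simp [measureReal_def]
  rw [hset, probReal_compl_eq_one_sub (.univ_pi fun _ => measurableSet_Iic), hpi,
    ← Set.compl_Ioi, probReal_compl_eq_one_sub measurableSet_Ioi]

lemma tendsto_iidLaw_real_lt_sampleMax {a : ℕ → ℝ} {ℓ : ℝ}
    (ha : Tendsto (fun n => n * μ.real (Set.Ioi (a n))) atTop (𝓝 ℓ)) :
    Tendsto (fun n => (iidLaw n μ).real {x | a n < sampleMax x}) atTop
      (𝓝 (1 - Real.exp (-ℓ))) := by
  have hneg : Tendsto (fun n : ℕ => n * -μ.real (Set.Ioi (a n))) atTop (𝓝 (-ℓ)) := by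
    simpa only [mul_neg] using ha.neg
  refine ((Real.tendsto_one_add_pow_exp_of_tendsto hneg).const_sub 1).congr' ?_
  filter_upwards [eventually_ne_atTop 0] with n hn
  rw [iidLaw_real_lt_sampleMax hn, sub_eq_add_neg 1 (μ.real _)]

end SampleMax

section SampleMean

variable {μ : Measure ℝ} [IsProbabilityMeasure μ] {n : ℕ}

lemma sampleMean_eq_inv_mul_sum :
    sampleMean (n := n) = fun x => (n : ℝ)⁻¹ * ∑ i, x i :=
  funext fun _ => div_eq_inv_mul _ _

lemma memLp_sampleMean {p : ENNReal} (hμ : MemLp id p μ) :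
    MemLp (sampleMean (n := n)) p (iidLaw n μ) := by
  have hsum : MemLp (fun x : Fin n → ℝ => ∑ i, x i) p (iidLaw n μ) :=
    memLp_finsetSum _ fun i _ => hμ.comp_measurePreserving (measurePreserving_eval _ i)
  exact sampleMean_eq_inv_mul_sum ▸ hsum.const_mul _

lemma integral_sampleMean (hn : n ≠ 0) (hμ : Integrable id μ) :
    (iidLaw n μ)[sampleMean] = μ[id] := by
  have hcoord (i : Fin n) : Integrable (fun x : Fin n → ℝ => x i) (iidLaw n μ) :=
    integrable_comp_eval (f := id) hμ
  rw [sampleMean_eq_inv_mul_sum, integral_const_mul, integral_finsetSum _ fun i _ => hcoord i]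
  simp [integral_eval, hn]

lemma variance_sampleMean (hμ : MemLp id 2 μ) :
    Var[sampleMean; iidLaw n μ] = Var[id; μ] / n := by
  have hsum : Var[fun x => ∑ i, x i; iidLaw n μ] = n * Var[id; μ] := by
    simpa [Finset.sum_fn] using
      variance_sum_pi (μ := fun _ : Fin n => μ) (X := fun _ => id) fun _ => hμ
  rw [sampleMean_eq_inv_mul_sum, variance_const_mul, hsum]
  field_simp

lemma iidLaw_real_le_abs_sampleMean_sub_le (hμ : MemLp id 2 μ) (hn : n ≠ 0) {ε : ℝ}
    (hε : 0 < ε) :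
    (iidLaw n μ).real {x | ε ≤ |sampleMean x - μ[id]|} ≤ Var[id; μ] / (n * ε ^ 2) := by
  have hchebyshev := meas_ge_le_variance_div_sq (memLp_sampleMean (n := n) hμ) hε
  rw [integral_sampleMean hn (hμ.integrable one_le_two), variance_sampleMean hμ, div_div]
    at hchebyshev
  have hvar : 0 ≤ Var[id; μ] := variance_nonneg _ _
  exact ENNReal.toReal_le_of_le_ofReal (by positivity) hchebyshev

lemma tendsto_iidLaw_real_le_abs_sampleMean_sub (hμ : MemLp id 2 μ) {ε : ℕ → ℝ}
    (hε : ∀ᶠ n in atTop, 0 < ε n) (hnε : Tendsto (fun n => n * ε n ^ 2) atTop atTop) :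
    Tendsto (fun n => (iidLaw n μ).real {x | ε n ≤ |sampleMean x - μ[id]|}) atTop (𝓝 0) := by
  refine squeeze_zero' (.of_forall fun _ => measureReal_nonneg) ?_
    (hnε.const_div_atTop Var[id; μ])
  filter_upwards [eventually_ne_atTop 0, hε] with n hn hεn
  exact iidLaw_real_le_abs_sampleMean_sub_le hμ hn hεn

end SampleMean

lemma real_tau_le_le {n : ℕ} (P : Measure (Fin n → ℝ)) [IsFiniteMeasure P] {c m ε : ℝ}
    (hc : 0 < c) (hεm : ε ≤ m) :
    P.real {x | tau x ≤ c} ≤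
      P.real {x | (m - ε) / c < sampleMax x} + P.real {x | ε ≤ |sampleMean x - m|} := by
  refine (measureReal_mono fun x hx => ?_).trans (measureReal_union_le _ _)
  rcases le_or_gt ε |sampleMean x - m| with hfar | hnear
  · exact Or.inr hfar
  · exact Or.inl (lt_sampleMax_of_tau_le hc hεm hnear hx)

lemma real_lt_sampleMax_le {n : ℕ} (P : Measure (Fin n → ℝ)) [IsFiniteMeasure P] {c m ε : ℝ}
    (hc : 0 < c) (hεm : ε ≤ m) :
    P.real {x | (m + ε) / c < sampleMax x} ≤
      P.real {x | tau x ≤ c} + P.real {x | ε ≤ |sampleMean x - m|} := by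
  refine (measureReal_mono fun x hx => ?_).trans (measureReal_union_le _ _)
  rcases le_or_gt ε |sampleMean x - m| with hfar | hnear
  · exact Or.inr hfar
  · exact Or.inl (tau_le_of_le_sampleMax hc hεm hnear (le_of_lt hx))

lemma tendsto_iidLaw_real_tau_le {μ : Measure ℝ} [IsProbabilityMeasure μ] (hμ : MemLp id 2 μ)
    {c ε : ℕ → ℝ} {ℓ : ℝ} (hc : ∀ᶠ n in atTop, 0 < c n)
    (hε : ∀ᶠ n in atTop, ε n ∈ Set.Ioc 0 μ[id])
    (hnε : Tendsto (fun n => n * ε n ^ 2) atTop atTop)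
    (hsub : Tendsto (fun n => n * μ.real (Set.Ioi ((μ[id] - ε n) / c n))) atTop (𝓝 ℓ))
    (hadd : Tendsto (fun n => n * μ.real (Set.Ioi ((μ[id] + ε n) / c n))) atTop (𝓝 ℓ)) :
    Tendsto (fun n => (iidLaw n μ).real {x | tau x ≤ c n}) atTop (𝓝 (1 - Real.exp (-ℓ))) := by
  have hdev := tendsto_iidLaw_real_le_abs_sampleMean_sub hμ (hε.mono fun _ h => h.1) hnε
  have hlower := (tendsto_iidLaw_real_lt_sampleMax hadd).sub hdev
  have hupper := (tendsto_iidLaw_real_lt_sampleMax hsub).add hdev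
  rw [sub_zero] at hlower
  rw [add_zero] at hupper
  refine tendsto_of_tendsto_of_tendsto_of_le_of_le' hlower hupper ?_ ?_
  · filter_upwards [hc, hε] with n hcn hεn
    exact sub_le_iff_le_add.2 (real_lt_sampleMax_le _ hcn hεn.2)
  · filter_upwards [hc, hε] with n hcn hεn
    exact real_tau_le_le _ hcn hεn.2

lemma tendsto_log_natCast_atTop : Tendsto (fun n : ℕ => Real.log n) atTop atTop :=
  Real.tendsto_log_atTop.comp tendsto_natCast_atTop_atTop

lemma tendsto_natCast_div_log_pow_atTop (k : ℕ) :
    Tendsto (fun n : ℕ => n / Real.log n ^ k) atTop atTop := by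
  have hzero : Tendsto (fun n : ℕ => Real.log n ^ k / n) atTop (𝓝 0) := by
    simpa [Function.comp_def] using
      (Real.tendsto_pow_log_div_mul_add_atTop 1 0 k one_ne_zero).comp tendsto_natCast_atTop_atTop
  have hpos : ∀ᶠ n : ℕ in atTop, 0 < Real.log n ^ k / n := by
    filter_upwards [tendsto_log_natCast_atTop.eventually_gt_atTop 0, eventually_gt_atTop 0]
      with n hL hn
    positivity
  exact (tendsto_nhdsWithin_iff.2 ⟨hzero, hpos⟩).inv_tendsto_nhdsGT_zero.congr fun n => inv_div _ _

lemma tendsto_natCast_mul_real_Ioi_of_exp_tail {μ : Measure ℝ} {r K s : ℝ} {a : ℕ → ℝ}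
    (hr : 0 < r)
    (htail : Tendsto (fun x => Real.exp (r * x) * μ.real (Set.Ioi x)) atTop (𝓝 K))
    (ha : Tendsto (fun n => r * a n - Real.log n) atTop (𝓝 s)) :
    Tendsto (fun n => n * μ.real (Set.Ioi (a n))) atTop (𝓝 (K * Real.exp (-s))) := by
  have ha_atTop : Tendsto a atTop atTop := by
    refine (tendsto_const_mul_atTop_of_pos hr).1 ?_
    simpa only [add_sub_cancel] using tendsto_log_natCast_atTop.atTop_add ha
  have hexp : Tendsto (fun n => Real.exp (-(r * a n - Real.log n))) atTop (𝓝 (Real.exp (-s))) :=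
    (Real.continuous_exp.tendsto _).comp ha.neg
  refine ((htail.comp ha_atTop).mul hexp).congr' ?_
  filter_upwards [eventually_gt_atTop 0] with n hn
  rw [Function.comp_apply, neg_sub, Real.exp_sub, Real.exp_log (by exact_mod_cast hn)]
  field_simp

lemma one_div_add_div_sq_pos {L t : ℝ} (hL : 0 < L) (hLt : -t < L) : 0 < 1 / L + t / L ^ 2 := by
  have hsum : 1 / L + t / L ^ 2 = (L + t) / L ^ 2 := by field_simp
  rw [hsum]
  exact div_pos (by linarith) (by positivity)

lemma tendsto_one_add_div_sq_div_sub (k t : ℝ) :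
    Tendsto (fun L : ℝ => (1 + k / L ^ 2) / (1 / L + t / L ^ 2) - L) atTop (𝓝 (-t)) := by
  have hrem : Tendsto (fun L : ℝ => -t + (k + t ^ 2) / (L + t)) atTop (𝓝 (-t + 0)) :=
    ((tendsto_atTop_add_const_right _ _ tendsto_id).const_div_atTop _).const_add _
  rw [add_zero] at hrem
  refine hrem.congr' ?_
  filter_upwards [eventually_gt_atTop 0, eventually_gt_atTop (-t)] with L hL hLt
  have hLt_ne : L + t ≠ 0 := by linarith
  have hden : 1 / L + t / L ^ 2 = (L + t) / L ^ 2 := by field_simp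
  rw [hden]
  field_simp
  ring

section ExpMeasure

variable {r : ℝ}

lemma expMeasure_eq_withDensity_restrict (r : ℝ) :
    expMeasure r = (volume.restrict (Set.Ioi 0)).withDensity
      fun x => ENNReal.ofReal (r * Real.exp (-(r * x))) := by
  change volume.withDensity (exponentialPDF r) = _
  rw [← withDensity_indicator measurableSet_Ioi]
  refine withDensity_congr_ae ?_
  filter_upwards [compl_mem_ae_iff.2 (measure_singleton (0 : ℝ))] with x (hx : x ≠ 0)
  rcases hx.lt_or_gt with hneg | hpos
  · rw [exponentialPDF_of_neg hneg, Set.indicator_of_notMem (Set.notMem_Ioi.2 hneg.le)]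
  · rw [exponentialPDF_of_nonneg hpos.le, Set.indicator_of_mem (Set.mem_Ioi.2 hpos)]

lemma integral_expMeasure {E : Type*} [NormedAddCommGroup E] [NormedSpace ℝ E] (hr : 0 < r)
    (f : ℝ → E) :
    ∫ x, f x ∂expMeasure r = ∫ x in Set.Ioi 0, (r * Real.exp (-(r * x))) • f x := by
  have htoReal (x : ℝ) : (ENNReal.ofReal (r * Real.exp (-(r * x)))).toReal =
      r * Real.exp (-(r * x)) := ENNReal.toReal_ofReal (by positivity)
  rw [expMeasure_eq_withDensity_restrict,
    integral_withDensity_eq_integral_toReal_smul (by fun_prop) (by simp)]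
  simp only [htoReal]

lemma integral_pow_expMeasure (hr : 0 < r) (k : ℕ) : ∫ x, x ^ k ∂expMeasure r = k ! / r ^ k := by
  have hgamma := Real.integral_rpow_mul_exp_neg_mul_Ioi (a := k + 1) (by positivity) hr
  simp only [add_sub_cancel_right, Real.rpow_natCast, Real.Gamma_nat_eq_factorial] at hgamma
  calc ∫ x, x ^ k ∂expMeasure r
      = r * ∫ x in Set.Ioi 0, x ^ k * Real.exp (-(r * x)) := by
        rw [integral_expMeasure hr, ← integral_const_mul]
        simp only [smul_eq_mul, mul_assoc, mul_comm (Real.exp _)]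
    _ = k ! / r ^ k := by
        rw [hgamma, ← Nat.cast_add_one, Real.rpow_natCast, one_div_pow, pow_succ]
        field_simp

lemma integral_id_expMeasure (hr : 0 < r) : (expMeasure r)[id] = 1 / r := by
  simpa using integral_pow_expMeasure hr 1

lemma memLp_two_id_expMeasure (hr : 0 < r) : MemLp id 2 (expMeasure r) := by
  refine (memLp_two_iff_integrable_sq aestronglyMeasurable_id).2 (.of_integral_ne_zero ?_)
  simp only [id_eq, integral_pow_expMeasure hr]
  positivity

lemma expMeasure_real_Ioi (hr : 0 < r) {x : ℝ} (hx : 0 ≤ x) :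
    (expMeasure r).real (Set.Ioi x) = Real.exp (-(r * x)) := by
  have := isProbabilityMeasure_expMeasure hr
  rw [← Set.compl_Iic, probReal_compl_eq_one_sub measurableSet_Iic, ← cdf_eq_real,
    cdf_expMeasure_eq hr, if_pos hx, sub_sub_cancel]

lemma tendsto_exp_mul_expMeasure_real_Ioi (hr : 0 < r) :
    Tendsto (fun x => Real.exp (r * x) * (expMeasure r).real (Set.Ioi x)) atTop (𝓝 1) := by
  refine tendsto_const_nhds.congr' ?_
  filter_upwards [eventually_ge_atTop 0] with x hx
  rw [expMeasure_real_Ioi hr hx, ← Real.exp_add, add_neg_cancel, Real.exp_zero]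

end ExpMeasure

section ExponentialTail

variable {μ : Measure ℝ} {r K : ℝ}

lemma log_sq_mul_div_sub_le_iff {L u b t : ℝ} (hL : 0 < L) (hb : 0 < b) :
    L ^ 2 * (u / b - 1 / L) ≤ t ↔ u ≤ b * (1 / L + t / L ^ 2) := by
  rw [← le_div_iff₀' (by positivity), sub_le_iff_le_add', div_le_iff₀' hb]

lemma tendsto_natCast_mul_real_Ioi_threshold (hr : 0 < r) {m : ℝ} (hm : m ≠ 0)
    (htail : Tendsto (fun x => Real.exp (r * x) * μ.real (Set.Ioi x)) atTop (𝓝 K)) (k t : ℝ) :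
    Tendsto (fun n : ℕ => n * μ.real (Set.Ioi ((m + k * (m / Real.log n ^ 2)) /
      (r * m * (1 / Real.log n + t / Real.log n ^ 2))))) atTop (𝓝 (K * Real.exp t)) := by
  rw [← neg_neg t]
  refine tendsto_natCast_mul_real_Ioi_of_exp_tail hr htail ?_
  refine ((tendsto_one_add_div_sq_div_sub k _).comp tendsto_log_natCast_atTop).congr fun n => ?_
  rw [Function.comp_apply]
  field_simp

lemma tendsto_iidLaw_real_tau_le_of_exp_tail [IsProbabilityMeasure μ] (hμ : MemLp id 2 μ)
    (hm : 0 < μ[id]) (hr : 0 < r)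
    (htail : Tendsto (fun x => Real.exp (r * x) * μ.real (Set.Ioi x)) atTop (𝓝 K)) (t : ℝ) :
    Tendsto (fun n : ℕ => (iidLaw n μ).real
      {x | tau x ≤ r * μ[id] * (1 / Real.log n + t / Real.log n ^ 2)}) atTop
      (𝓝 (1 - Real.exp (-(K * Real.exp t)))) := by
  have hlog := tendsto_log_natCast_atTop
  have hthreshold := tendsto_natCast_mul_real_Ioi_threshold hr hm.ne' htail
  refine tendsto_iidLaw_real_tau_le (ε := fun n => μ[id] / Real.log n ^ 2) hμ ?_ ?_ ?_ ?_ ?_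
  · filter_upwards [hlog.eventually_gt_atTop 0, hlog.eventually_gt_atTop (-t)] with n hL hLt
    exact mul_pos (mul_pos hr hm) (one_div_add_div_sq_pos hL hLt)
  · filter_upwards [hlog.eventually_ge_atTop 1] with n hL
    exact ⟨by positivity, div_le_self hm.le (one_le_pow₀ hL)⟩
  · refine ((tendsto_natCast_div_log_pow_atTop 4).const_mul_atTop (pow_pos hm 2)).congr fun n => ?_
    ring
  · simpa only [neg_one_mul, ← sub_eq_add_neg] using hthreshold (-1) t
  · simpa only [one_mul] using hthreshold 1 t

theorem tau_asymptotics_exponential_general [IsProbabilityMeasure μ] (hμ : MemLp id 2 μ)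
    (hm : 0 < μ[id]) (hr : 0 < r)
    (htail : Tendsto (fun x => Real.exp (r * x) * μ.real (Set.Ioi x)) atTop (𝓝 K)) (t : ℝ) :
    Tendsto (fun n : ℕ => iidLaw n μ
      {x | Real.log n ^ 2 * (tau x / (r * μ[id]) - 1 / Real.log n) ≤ t}) atTop
      (𝓝 (ENNReal.ofReal (1 - Real.exp (-(K * Real.exp t))))) := by
  refine (ENNReal.tendsto_ofReal
    (tendsto_iidLaw_real_tau_le_of_exp_tail hμ hm hr htail t)).congr' ?_
  filter_upwards [tendsto_log_natCast_atTop.eventually_gt_atTop 0] with n hL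
  rw [ofReal_measureReal]
  simp only [log_sq_mul_div_sub_le_iff hL (mul_pos hr hm)]

end ExponentialTail

/-- For an i.i.d. `Exponential(1)` sample, `(log n)²·(τ_n − 1/log n)` converges in
distribution to `−G`, with `G` standard Gumbel: for every `t`,
`P((log n)²·(τ_n − 1/log n) ≤ t) → 1 − exp(−e^t)`. -/
theorem tau_asymptotics_exponential :
    ∀ t : ℝ,
      Tendsto
        (fun n : ℕ =>
          iidExp n 1 {x | (Real.log n) ^ 2 * (tau x - 1 / Real.log n) ≤ t})
        atTop
        (nhds (ENNReal.ofReal (1 - Real.exp (-Real.exp t)))) := by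
  have := isProbabilityMeasure_expMeasure one_pos
  have hmean : (expMeasure 1)[id] = 1 := by rw [integral_id_expMeasure one_pos, div_one]
  intro t
  simpa only [iidExp, iidLaw, hmean, one_mul, mul_one, div_one] using
    tau_asymptotics_exponential_general (memLp_two_id_expMeasure one_pos)
      (one_pos.trans_eq hmean.symm) one_pos (tendsto_exp_mul_expMeasure_real_Ioi one_pos) t
end
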